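/- Let w:ℝ→[0,∞) be locally Lipschitz with w′(q)≤0 for q≤0 and w′(q)=0 for q>0, and let φ be a smooth function with lim_{|x|→∞}|x|^{3/2}φ(t,x)=0. Then there is a universal constant C such that for each t: ∫_{ℝ³} (⟨t−r⟩²/r²)|φ(t,x)|² w(q) dx ≤ C ∫_{ℝ³}( ⟨t+r⟩²|L(rφ)/r|² + ⟨t−r⟩²|L̲(rφ)/r|² ) w(q) dx. -/

import Mathlib

noncomputable section

open Real MeasureTheory Filter
open scoped RealInnerProductSpace Topology

/-- Spatial points: `ℝ³` with the Euclidean norm. -/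
abbrev Pt : Type := EuclideanSpace ℝ (Fin 3)

/-- `r = |x|`. -/
def rad (x : Pt) : ℝ := ‖x‖

/-- Japanese bracket `⟨a⟩ = (1+a²)^{1/2}`. -/
def jb (a : ℝ) : ℝ := Real.sqrt (1 + a ^ 2)

/-- `∂_t`. -/
def dT (f : ℝ → Pt → ℂ) : ℝ → Pt → ℂ := fun t x => deriv (fun s => f s x) t

/-- `∂_i`. -/
def dX (i : Fin 3) (f : ℝ → Pt → ℂ) : ℝ → Pt → ℂ :=
  fun t x => fderiv ℝ (fun y => f t y) x (EuclideanSpace.single i 1)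

/-- `∂_r = Σ (x_i/r) ∂_i`. -/
def dR (f : ℝ → Pt → ℂ) : ℝ → Pt → ℂ :=
  fun t x => ((rad x : ℝ) : ℂ)⁻¹ * ∑ i, ((x i : ℝ) : ℂ) * dX i f t x

/-- `L = ∂_t + ∂_r`. -/
def dL (f : ℝ → Pt → ℂ) : ℝ → Pt → ℂ := fun t x => dT f t x + dR f t x

/-- `L̲ = ∂_t − ∂_r`. -/
def dLbar (f : ℝ → Pt → ℂ) : ℝ → Pt → ℂ := fun t x => dT f t x - dR f t x

/-- angular derivative `∂̸_i = ∂_i − ω_i ∂_r`. -/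
def dAng (i : Fin 3) (f : ℝ → Pt → ℂ) : ℝ → Pt → ℂ :=
  fun t x => dX i f t x - ((x i / rad x : ℝ) : ℂ) * dR f t x

/-- `|∂̸ f|²`. -/
def angSq (f : ℝ → Pt → ℂ) (t : ℝ) (x : Pt) : ℝ := ∑ i, ‖dAng i f t x‖ ^ 2

/-- multiplication by `r`. -/
def rmul (f : ℝ → Pt → ℂ) : ℝ → Pt → ℂ := fun t x => ((rad x : ℝ) : ℂ) * f t x

/-- `□ = −∂_t² + Δ`. -/
def box (f : ℝ → Pt → ℂ) : ℝ → Pt → ℂ :=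
  fun t x => - dT (dT f) t x + ∑ i, dX i (dX i f) t x

/-- rotation `Ω_{ij} = x_i ∂_j − x_j ∂_i`. -/
def vrot (i j : Fin 3) (f : ℝ → Pt → ℂ) : ℝ → Pt → ℂ :=
  fun t x => ((x i : ℝ) : ℂ) * dX j f t x - ((x j : ℝ) : ℂ) * dX i f t x

/-- boost `Ω_{0i} = t ∂_i + x_i ∂_t`. -/
def vboost (i : Fin 3) (f : ℝ → Pt → ℂ) : ℝ → Pt → ℂ :=
  fun t x => (t : ℂ) * dX i f t x + ((x i : ℝ) : ℂ) * dT f t x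

/-- scaling `S = t ∂_t + r ∂_r`. -/
def vscal (f : ℝ → Pt → ℂ) : ℝ → Pt → ℂ :=
  fun t x => (t : ℂ) * dT f t x + ((rad x : ℝ) : ℂ) * dR f t x

/-- The commutator vector fields `Z`. -/
inductive VF : Type
  | time : VF
  | space : Fin 3 → VF
  | rot : Fin 3 → Fin 3 → VF
  | boost : Fin 3 → VF
  | scal : VF
  deriving DecidableEq, Fintype

/-- Action of a commutator vector field on a function. -/
def VF.app : VF → (ℝ → Pt → ℂ) → (ℝ → Pt → ℂ)
  | time => dT
  | space i => dX i
  | rot i j => vrot i j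
  | boost i => vboost i
  | scal => vscal

/-- `Z^I` for a multiindex `I` (a list of vector fields). -/
def Ziter : List VF → (ℝ → Pt → ℂ) → ℝ → Pt → ℂ
  | [], f => f
  | z :: l, f => z.app (Ziter l f)

/-- `C^∞` smoothness for a function of `(t,x)`. -/
def Smooth2 (f : ℝ → Pt → ℂ) : Prop := ContDiff ℝ (⊤ : ℕ∞) (Function.uncurry f)

/-- real-valued versions of the derivative operators -/
def dTR (f : ℝ → Pt → ℝ) : ℝ → Pt → ℝ := fun t x => deriv (fun s => f s x) t

def dXR (i : Fin 3) (f : ℝ → Pt → ℝ) : ℝ → Pt → ℝ :=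
  fun t x => fderiv ℝ (fun y => f t y) x (EuclideanSpace.single i 1)

def boxR (f : ℝ → Pt → ℝ) : ℝ → Pt → ℝ :=
  fun t x => - dTR (dTR f) t x + ∑ i, dXR i (dXR i f) t x

/-- `∂_q` acting on radiation fields `F(q,ω)`. -/
def dq (F : ℝ → Pt → ℂ) : ℝ → Pt → ℂ := fun q ω => deriv (fun s => F s ω) q

/-- `∂_{ω_i}` acting on radiation fields. -/
def dOm (i : Fin 3) (F : ℝ → Pt → ℂ) : ℝ → Pt → ℂ :=
  fun q ω => fderiv ℝ (fun y => F q y) ω (EuclideanSpace.single i 1)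

/-- angular rotation `ω_i ∂_{ω_j} − ω_j ∂_{ω_i}` on radiation fields. -/
def aRot (i j : Fin 3) (F : ℝ → Pt → ℂ) : ℝ → Pt → ℂ :=
  fun q ω => ((ω i : ℝ) : ℂ) * dOm j F q ω - ((ω j : ℝ) : ℂ) * dOm i F q ω

/-- `⟨q⟩∂_q` on radiation fields. -/
def qdq (F : ℝ → Pt → ℂ) : ℝ → Pt → ℂ := fun q ω => ((jb q : ℝ) : ℂ) * dq F q ω

/-- `q∂_q` on radiation fields. -/
def qmdq (F : ℝ → Pt → ℂ) : ℝ → Pt → ℂ := fun q ω => (q : ℂ) * dq F q ω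

/-- iterated angular derivatives `∂_ω^α` (as iterated rotations). -/
def aIter : List (Fin 3 × Fin 3) → (ℝ → Pt → ℂ) → ℝ → Pt → ℂ
  | [], F => F
  | p :: l, F => aRot p.1 p.2 (aIter l F)

/-- `‖F‖_{N,∞,γ} ≤ ε`, stated term by term: every seminorm
`sup |(⟨q⟩∂_q)^k ∂_ω^α F| ⟨q⟩^γ` with `k+|α| ≤ N` is at most `ε`. -/
def RadBound (N : ℕ) (γ ε : ℝ) (F : ℝ → Pt → ℂ) : Prop :=
  ∀ (k : ℕ) (l : List (Fin 3 × Fin 3)), k + l.length ≤ N →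
    ∀ (q : ℝ) (ω : Pt), rad ω = 1 →
      ‖(qdq^[k]) (aIter l F) q ω‖ * jb q ^ γ ≤ ε

/-- spacetime indices `α ∈ {0,1,2,3}`: `none` is the time index. -/
abbrev Ix : Type := Option (Fin 3)

/-- `L^α(ω) = (1, ω)`. -/
def Lup : Ix → Pt → ℝ
  | none => fun _ => 1
  | some i => fun ω => ω i

/-- `L_α(ω) = (−1, ω)`. -/
def Llow : Ix → Pt → ℝ
  | none => fun _ => -1
  | some i => fun ω => ω i

/-- `∂_α`. -/
def pd : Ix → (ℝ → Pt → ℂ) → ℝ → Pt → ℂ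
  | none => dT
  | some i => dX i

/-- `∂_α` (real valued). -/
def pdR : Ix → (ℝ → Pt → ℝ) → ℝ → Pt → ℝ
  | none => dTR
  | some i => dXR i

/-- the surface measure on the unit sphere `S² ⊆ ℝ³`. -/
def sphM : Measure (Metric.sphere (0 : Pt) 1) := (volume : Measure Pt).toSphere

/-- weighted `L²` norm `(∫ |g(t,x)|² w(r−t) dx)^{1/2}`. -/
def sqL2 (w : ℝ → ℝ) (g : ℝ → Pt → ℂ) (t : ℝ) : ℝ :=
  Real.sqrt (∫ x : Pt, ‖g t x‖ ^ 2 * w (rad x - t))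


/-- the Hardy density `⟨t+r⟩²|L(rφ)/r|² + ⟨t−r⟩²|L̲(rφ)/r|²` -/
def hDens (φ : ℝ → Pt → ℂ) (t : ℝ) (x : Pt) : ℝ :=
  jb (t + rad x) ^ 2 * ‖dL (rmul φ) t x / ((rad x : ℝ) : ℂ)‖ ^ 2
    + jb (t - rad x) ^ 2 * ‖dLbar (rmul φ) t x / ((rad x : ℝ) : ℂ)‖ ^ 2

/-!
Along a ray put `v(r) = φ(t, rω)`, `T = |t|` and `W(r) = w(r - t)`, so that `∂_r(rφ) = v + r v'`.
The flux `F = r (r² - ⟨T⟩²) |v|²` vanishes at `r = 0` and is nonpositive on `[0, T]`, while `W` is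
nonincreasing on `[0, T]` and constant afterwards; hence `∫₀ᴿ F' W ≤ F(R) W(R)`, whose positive part
tends to `0` as `R → ∞` by the decay of `φ`. On the other hand
`F' = (r² + ⟨T⟩²) |v|² + 2 (r² - ⟨T⟩²) ⟪v, v + r v'⟫`, where `⟨r + T⟩² ≤ 2 (r² + ⟨T⟩²)` and
`|r² - ⟨T⟩²| ≤ ⟨r + T⟩ ⟨r - T⟩`, so by AM-GM `4 F'` is at least
`⟨r + T⟩² |v|² - 16 ⟨r - T⟩² |v + r v'|²`. The estimate follows by integrating over the sphere,
because `⟨t - r⟩ ≤ ⟨r + T⟩`, `2 ∂_r = L - L̲`, and `⟨r - T⟩` is at most both `⟨t + r⟩` and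
`⟨t - r⟩`.
-/

section JapaneseBracket

lemma jb_sq (a : ℝ) : jb a ^ 2 = 1 + a ^ 2 := Real.sq_sqrt (by positivity)

lemma jb_nonneg (a : ℝ) : 0 ≤ jb a := Real.sqrt_nonneg _

@[fun_prop]
lemma continuous_jb : Continuous jb := by unfold jb; fun_prop

lemma jb_le_jb {a b : ℝ} (h : |a| ≤ |b|) : jb a ≤ jb b :=
  Real.sqrt_le_sqrt (add_le_add_right (sq_le_sq.2 h) 1)

lemma jb_add_sq_le (a b : ℝ) : jb (a + b) ^ 2 ≤ 2 * (a ^ 2 + jb b ^ 2) := by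
  simp only [jb_sq]
  linarith [add_sq_le (a := a) (b := b)]

lemma abs_sq_sub_jb_sq_le (a b : ℝ) : |a ^ 2 - jb b ^ 2| ≤ jb (a + b) * jb (a - b) := by
  refine abs_le_of_sq_le_sq ?_ (mul_nonneg (jb_nonneg _) (jb_nonneg _))
  simp only [mul_pow, jb_sq]
  linarith [sq_nonneg a]

end JapaneseBracket

section RealAnalysis

lemma absolutelyContinuousOnInterval_of_locallyLipschitz {X : Type*} [PseudoMetricSpace X]
    {f : ℝ → X} (hf : LocallyLipschitz f) (a b : ℝ) : AbsolutelyContinuousOnInterval f a b := by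
  obtain ⟨K, hK⟩ := (hf.locallyLipschitzOn (s := Set.uIcc a b)).exists_lipschitzOnWith_of_compact
    isCompact_uIcc
  exact hK.absolutelyContinuousOnInterval

lemma integral_deriv_mul_le_sub {F W : ℝ → ℝ} {a b : ℝ} (hab : a ≤ b)
    (hF : AbsolutelyContinuousOnInterval F a b) (hW : AbsolutelyContinuousOnInterval W a b)
    (hFW : ∀ r ∈ Set.Icc a b, 0 ≤ F r * deriv W r) :
    ∫ r in a..b, deriv F r * W r ≤ F b * W b - F a * W a := by
  have hparts := hF.integral_mul_deriv_eq_deriv_mul hW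
  have hnonneg := intervalIntegral.integral_nonneg (μ := volume) hab hFW
  linarith

lemma lintegral_Ioc_ofReal {f : ℝ → ℝ} {a b : ℝ} (hab : a ≤ b)
    (hf : IntervalIntegrable f volume a b) (hf0 : 0 ≤ f) :
    ∫⁻ r in Set.Ioc a b, ENNReal.ofReal (f r) = ENNReal.ofReal (∫ r in a..b, f r) := by
  rw [intervalIntegral.integral_of_le hab]
  exact (ofReal_integral_eq_lintegral_ofReal hf.1 (ae_of_all _ hf0)).symm

lemma lintegral_Ioi_le_of_intervalIntegral_le {f g b : ℝ → ℝ} {a : ℝ}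
    (hf : LocallyIntegrable f) (hg : LocallyIntegrable g) (hf0 : 0 ≤ f) (hg0 : 0 ≤ g)
    (hb : Tendsto b atTop (𝓝 0))
    (hfg : ∀ᶠ R in atTop, ∫ r in a..R, f r ≤ b R + ∫ r in a..R, g r) :
    ∫⁻ r in Set.Ioi a, ENNReal.ofReal (f r) ≤ ∫⁻ r in Set.Ioi a, ENNReal.ofReal (g r) := by
  have htrunc : Tendsto (fun R => ∫⁻ r in Set.Ioc a R, ENNReal.ofReal (f r)) atTop
      (𝓝 (∫⁻ r in Set.Ioi a, ENNReal.ofReal (f r))) := by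
    have hcover : AECover (volume.restrict (Set.Ioi a)) atTop Set.Iic := aecover_Iic tendsto_id
    refine (hcover.lintegral_tendsto_of_countably_generated
      hf.aestronglyMeasurable.aemeasurable.ennreal_ofReal.restrict).congr fun R => ?_
    rw [Measure.restrict_restrict measurableSet_Iic, Set.inter_comm, Set.Ioi_inter_Iic]
  have hbound := (ENNReal.tendsto_ofReal hb).add_const
    (∫⁻ r in Set.Ioi a, ENNReal.ofReal (g r))
  rw [ENNReal.ofReal_zero, zero_add] at hbound
  refine le_of_tendsto_of_tendsto htrunc hbound ?_
  filter_upwards [hfg, eventually_ge_atTop a] with R hR haR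
  have hfR : IntervalIntegrable f volume a R :=
    (hf.integrableOn_isCompact isCompact_uIcc).intervalIntegrable
  have hgR : IntervalIntegrable g volume a R :=
    (hg.integrableOn_isCompact isCompact_uIcc).intervalIntegrable
  calc ∫⁻ r in Set.Ioc a R, ENNReal.ofReal (f r)
      = ENNReal.ofReal (∫ r in a..R, f r) := lintegral_Ioc_ofReal haR hfR hf0
    _ ≤ ENNReal.ofReal (b R) + ENNReal.ofReal (∫ r in a..R, g r) :=
        (ENNReal.ofReal_le_ofReal hR).trans ENNReal.ofReal_add_le
    _ = ENNReal.ofReal (b R) + ∫⁻ r in Set.Ioc a R, ENNReal.ofReal (g r) := by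
        rw [lintegral_Ioc_ofReal haR hgR hg0]
    _ ≤ ENNReal.ofReal (b R) + ∫⁻ r in Set.Ioi a, ENNReal.ofReal (g r) := by
        gcongr
        exact Set.Ioc_subset_Ioi_self

lemma integrable_and_integral_le_of_lintegral_le {α : Type*} [MeasurableSpace α] {μ : Measure α}
    {f g : α → ℝ} (hf : AEStronglyMeasurable f μ) (hf0 : 0 ≤ f) (hg : Integrable g μ)
    (hg0 : 0 ≤ g) (hfg : ∫⁻ x, ENNReal.ofReal (f x) ∂μ ≤ ∫⁻ x, ENNReal.ofReal (g x) ∂μ) :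
    Integrable f μ ∧ ∫ x, f x ∂μ ≤ ∫ x, g x ∂μ := by
  have hg_fin : ∫⁻ x, ENNReal.ofReal (g x) ∂μ < ⊤ := hg.lintegral_lt_top
  refine ⟨⟨hf, (hasFiniteIntegral_iff_ofReal (ae_of_all _ hf0)).2 (hfg.trans_lt hg_fin)⟩, ?_⟩
  rw [integral_eq_lintegral_of_nonneg_ae (ae_of_all _ hf0) hf,
    integral_eq_lintegral_of_nonneg_ae (ae_of_all _ hg0) hg.aestronglyMeasurable]
  exact ENNReal.toReal_mono hg_fin.ne hfg

end RealAnalysis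

section Polar

variable {E : Type*} [NormedAddCommGroup E] [NormedSpace ℝ E] [FiniteDimensional ℝ E]
  [Nontrivial E] [MeasurableSpace E] [BorelSpace E] (μ : Measure E) [μ.IsAddHaarMeasure]

lemma measurePreserving_sphere_smul :
    MeasurePreserving (fun p : Metric.sphere (0 : E) 1 × Set.Ioi (0 : ℝ) => (p.2 : ℝ) • (p.1 : E))
      (μ.toSphere.prod (Measure.volumeIoiPow (Module.finrank ℝ E - 1))) μ := by
  have hsymm : MeasurePreserving (homeomorphUnitSphereProd E).symm
      (μ.toSphere.prod (Measure.volumeIoiPow (Module.finrank ℝ E - 1))) (μ.comap Subtype.val) :=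
    μ.measurePreserving_homeomorphUnitSphereProd.symm
      (homeomorphUnitSphereProd E).toMeasurableEquiv
  have hcoe : MeasurePreserving (Subtype.val : ({0}ᶜ : Set E) → E) (μ.comap Subtype.val) μ := by
    simpa only [restrict_compl_singleton] using
      measurePreserving_subtype_coe (μa := μ) (measurableSet_singleton (0 : E)).compl
  exact hcoe.comp hsymm

lemma lintegral_eq_lintegral_sphere_lintegral_Ioi {f : E → ENNReal} (hf : AEMeasurable f μ) :
    ∫⁻ x, f x ∂μ = ∫⁻ ω, (∫⁻ r in Set.Ioi (0 : ℝ),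
      ENNReal.ofReal (r ^ (Module.finrank ℝ E - 1)) * f (r • (ω : E))) ∂μ.toSphere := by
  have hpolar := measurePreserving_sphere_smul μ
  calc ∫⁻ x, f x ∂μ
      = ∫⁻ p, f ((p.2 : ℝ) • (p.1 : E))
          ∂(μ.toSphere.prod (Measure.volumeIoiPow (Module.finrank ℝ E - 1))) := by
        conv_lhs => rw [← hpolar.map_eq]
        exact lintegral_map' (hpolar.map_eq.symm ▸ hf) hpolar.aemeasurable
    _ = ∫⁻ ω, (∫⁻ r, f ((r : ℝ) • (ω : E)) ∂(Measure.volumeIoiPow (Module.finrank ℝ E - 1)))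
          ∂μ.toSphere :=
        lintegral_prod _ (hf.comp_quasiMeasurePreserving hpolar.quasiMeasurePreserving)
    _ = _ := by
        refine lintegral_congr fun ω => ?_
        rw [Measure.volumeIoiPow, lintegral_withDensity_eq_lintegral_mul_non_measurable₀ _
          (by fun_prop) (by simp)]
        exact lintegral_subtype_comap measurableSet_Ioi fun r : ℝ =>
          ENNReal.ofReal (r ^ (Module.finrank ℝ E - 1)) * f (r • (ω : E))

end Polar

section Rays

variable {E F : Type*} [NormedAddCommGroup E] [NormedSpace ℝ E]

lemma tendsto_smul_atTop_cobounded {ω : E} (hω : ω ≠ 0) :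
    Tendsto (fun R : ℝ => R • ω) atTop (Bornology.cobounded E) := by
  rw [← tendsto_norm_atTop_iff_cobounded]
  simp only [norm_smul]
  exact tendsto_abs_atTop_atTop.atTop_mul_const (norm_pos_iff.2 hω)

variable [NormedAddCommGroup F]

lemma tendsto_pow_three_mul_norm_sq_of_decay {f : E → F}
    (hf : Tendsto (fun x => ‖x‖ ^ ((3 : ℝ) / 2) * ‖f x‖) (Bornology.cobounded E) (𝓝 0))
    {ω : E} (hω : ‖ω‖ = 1) :
    Tendsto (fun R : ℝ => R ^ 3 * ‖f (R • ω)‖ ^ 2) atTop (𝓝 0) := by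
  have hω0 : ω ≠ 0 := norm_ne_zero_iff.1 (hω ▸ one_ne_zero)
  have hsq := (hf.comp (tendsto_smul_atTop_cobounded hω0)).pow 2
  rw [zero_pow two_ne_zero] at hsq
  refine hsq.congr' ?_
  filter_upwards [eventually_ge_atTop 0] with R hR
  have hpow : (R ^ ((3 : ℝ) / 2)) ^ 2 = R ^ 3 := by
    rw [← Real.rpow_mul_natCast hR, ← Real.rpow_natCast]
    norm_num
  rw [Function.comp_apply, norm_smul, hω, mul_one, Real.norm_of_nonneg hR, mul_pow, hpow]

variable [NormedSpace ℝ F]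

lemma smul_deriv_comp_smul {f : E → F} {ω : E} {r : ℝ} (hf : DifferentiableAt ℝ f (r • ω)) :
    r • deriv (fun s : ℝ => f (s • ω)) r = fderiv ℝ f (r • ω) (r • ω) := by
  have hline : HasDerivAt (fun s : ℝ => s • ω) ω r := by
    simpa using (hasDerivAt_id r).smul_const ω
  have hcomp : HasDerivAt (fun s : ℝ => f (s • ω)) (fderiv ℝ f (r • ω) ω) r :=
    hf.hasFDerivAt.comp_hasDerivAt r hline
  rw [hcomp.deriv, map_smul]

end Rays

/-- The weights of the Hardy inequality: nonnegative, locally Lipschitz, nonincreasing up to `T`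
and constant from `T` on. Monotonicity is encoded by the derivative, whose junk value `0` at points
of non-differentiability is harmless because these points form a null set. -/
structure IsHardyWeight (W : ℝ → ℝ) (T : ℝ) : Prop where
  locallyLipschitz : LocallyLipschitz W
  nonneg : ∀ r, 0 ≤ W r
  deriv_nonpos : ∀ r ≤ T, deriv W r ≤ 0
  deriv_eq_zero : ∀ r, T < r → deriv W r = 0

namespace IsHardyWeight

variable {W : ℝ → ℝ} {T : ℝ}

lemma mono (hW : IsHardyWeight W T) {T' : ℝ} (hT : T ≤ T') : IsHardyWeight W T' where
  locallyLipschitz := hW.locallyLipschitz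
  nonneg := hW.nonneg
  deriv_nonpos r _ := (le_or_gt r T).elim (hW.deriv_nonpos r) fun h => (hW.deriv_eq_zero r h).le
  deriv_eq_zero r hr := hW.deriv_eq_zero r (hT.trans_lt hr)

lemma comp_sub_const (hW : IsHardyWeight W T) (t : ℝ) :
    IsHardyWeight (fun r => W (r - t)) (T + t) where
  locallyLipschitz := hW.locallyLipschitz.comp
    (IsometryEquiv.subRight t).isometry.lipschitz.locallyLipschitz
  nonneg r := hW.nonneg (r - t)
  deriv_nonpos r hr := by
    rw [deriv_comp_sub_const]
    exact hW.deriv_nonpos _ (by linarith)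
  deriv_eq_zero r hr := by
    rw [deriv_comp_sub_const]
    exact hW.deriv_eq_zero _ (by linarith)

lemma eq_of_le (hW : IsHardyWeight W T) {r : ℝ} (hr : T ≤ r) : W r = W T := by
  have hsub := (absolutelyContinuousOnInterval_of_locallyLipschitz
    hW.locallyLipschitz T r).integral_deriv_eq_sub
  have hzero : ∫ s in T..r, deriv W s = 0 := by
    refine intervalIntegral.integral_zero_ae (ae_of_all _ fun s hs => ?_)
    rw [Set.uIoc_of_le hr] at hs
    exact hW.deriv_eq_zero s hs.1
  linarith

end IsHardyWeight

section HalfLine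

variable {E : Type*} [NormedAddCommGroup E]

/-- The flux `r (r² - ⟨T⟩²) |v|²` whose derivative is integrated against the weight in the proof of
the Hardy inequality on the half-line. -/
def hardyFlux (T : ℝ) (v : ℝ → E) (r : ℝ) : ℝ := r * (r ^ 2 - jb T ^ 2) * ‖v r‖ ^ 2

variable {v : ℝ → E} {T r : ℝ}

lemma hardyFlux_zero (T : ℝ) (v : ℝ → E) : hardyFlux T v 0 = 0 := by simp [hardyFlux]

lemma hardyFlux_nonpos (hr : 0 ≤ r) (hrT : r ≤ T) : hardyFlux T v r ≤ 0 := by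
  have hsq : r ^ 2 - jb T ^ 2 ≤ 0 := by
    rw [jb_sq]
    linarith [pow_le_pow_left₀ hr hrT 2]
  exact mul_nonpos_of_nonpos_of_nonneg (mul_nonpos_of_nonneg_of_nonpos hr hsq) (sq_nonneg _)

lemma hardyFlux_le (hr : 0 ≤ r) : hardyFlux T v r ≤ r ^ 3 * ‖v r‖ ^ 2 := by
  have h : 0 ≤ r * jb T ^ 2 * ‖v r‖ ^ 2 := by positivity
  unfold hardyFlux
  linarith

variable [InnerProductSpace ℝ E]

lemma contDiff_hardyFlux {n : WithTop ℕ∞} (hv : ContDiff ℝ n v) (T : ℝ) :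
    ContDiff ℝ n (hardyFlux T v) :=
  (contDiff_id.mul ((contDiff_id.pow 2).sub contDiff_const)).mul (hv.norm_sq ℝ)

lemma hasDerivAt_hardyFlux {v' : E} (hv : HasDerivAt v v' r) (T : ℝ) :
    HasDerivAt (hardyFlux T v)
      ((r ^ 2 + jb T ^ 2) * ‖v r‖ ^ 2 + 2 * (r ^ 2 - jb T ^ 2) * ⟪v r, v r + r • v'⟫) r := by
  have hsq : HasDerivAt (fun s : ℝ => s ^ 2 - jb T ^ 2) (2 * r) r := by
    simpa using (hasDerivAt_pow 2 r).sub_const (jb T ^ 2)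
  refine (((hasDerivAt_id r).mul hsq).mul hv.norm_sq).congr_deriv ?_
  rw [inner_add_right, real_inner_smul_right, real_inner_self_eq_norm_sq]
  simp only [id, Pi.mul_apply]
  ring

lemma jb_add_sq_mul_norm_sq_le_deriv_hardyFlux (hv : DifferentiableAt ℝ v r) (T : ℝ) :
    jb (r + T) ^ 2 * ‖v r‖ ^ 2 ≤
      4 * deriv (hardyFlux T v) r + 16 * (jb (r - T) ^ 2 * ‖v r + r • deriv v r‖ ^ 2) := by
  rw [(hasDerivAt_hardyFlux hv.hasDerivAt T).deriv]
  set z := v r + r • deriv v r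
  have hcross : |(r ^ 2 - jb T ^ 2) * ⟪v r, z⟫| ≤
      (jb (r + T) * ‖v r‖) * (jb (r - T) * ‖z‖) := by
    calc |(r ^ 2 - jb T ^ 2) * ⟪v r, z⟫|
        ≤ (jb (r + T) * jb (r - T)) * (‖v r‖ * ‖z‖) := by
          rw [abs_mul]
          gcongr
          · exact mul_nonneg (jb_nonneg _) (jb_nonneg _)
          · exact abs_sq_sub_jb_sq_le r T
          · exact abs_real_inner_le_norm _ _
      _ = (jb (r + T) * ‖v r‖) * (jb (r - T) * ‖z‖) := by ring
  have hmain : jb (r + T) ^ 2 * ‖v r‖ ^ 2 ≤ 2 * (r ^ 2 + jb T ^ 2) * ‖v r‖ ^ 2 := by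
    gcongr
    exact jb_add_sq_le r T
  have hamgm := sq_nonneg (jb (r + T) * ‖v r‖ - 4 * (jb (r - T) * ‖z‖))
  linarith [(abs_le.1 hcross).1]

variable {W : ℝ → ℝ}

lemma integral_deriv_hardyFlux_mul_le (hW : IsHardyWeight W T) (hv : ContDiff ℝ 1 v) {R : ℝ}
    (hR : 0 ≤ R) : ∫ r in (0 : ℝ)..R, deriv (hardyFlux T v) r * W r ≤ hardyFlux T v R * W R := by
  have hsign : ∀ r ∈ Set.Icc 0 R, 0 ≤ hardyFlux T v r * deriv W r := by
    intro r hr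
    rcases le_or_gt r T with hrT | hrT
    · exact mul_nonneg_of_nonpos_of_nonpos (hardyFlux_nonpos hr.1 hrT) (hW.deriv_nonpos r hrT)
    · rw [hW.deriv_eq_zero r hrT, mul_zero]
  have hparts := integral_deriv_mul_le_sub hR
    (contDiff_hardyFlux hv T).contDiffOn.absolutelyContinuousOnInterval
    (absolutelyContinuousOnInterval_of_locallyLipschitz hW.locallyLipschitz 0 R) hsign
  rwa [hardyFlux_zero, zero_mul, sub_zero] at hparts

lemma integral_hardy_le (hW : IsHardyWeight W T) (hv : ContDiff ℝ 1 v) {R : ℝ} (hR : 0 ≤ R) :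
    ∫ r in (0 : ℝ)..R, jb (r + T) ^ 2 * ‖v r‖ ^ 2 * W r ≤
      4 * (hardyFlux T v R * W R) +
        ∫ r in (0 : ℝ)..R, 16 * (jb (r - T) ^ 2 * ‖v r + r • deriv v r‖ ^ 2 * W r) := by
  have hv_cont := hv.continuous
  have hF'_cont := (contDiff_hardyFlux hv T).continuous_deriv le_rfl
  have hW_cont := hW.locallyLipschitz.continuous
  have hpointwise : ∫ r in (0 : ℝ)..R, jb (r + T) ^ 2 * ‖v r‖ ^ 2 * W r ≤
      ∫ r in (0 : ℝ)..R, (4 * (deriv (hardyFlux T v) r * W r) +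
        16 * (jb (r - T) ^ 2 * ‖v r + r • deriv v r‖ ^ 2 * W r)) := by
    refine intervalIntegral.integral_mono_on hR
      (Continuous.intervalIntegrable (by fun_prop) _ _)
      (Continuous.intervalIntegrable (by fun_prop) _ _) fun r _ => ?_
    have h := mul_le_mul_of_nonneg_right
      (jb_add_sq_mul_norm_sq_le_deriv_hardyFlux (hv.differentiable one_ne_zero r) T) (hW.nonneg r)
    linarith
  rw [intervalIntegral.integral_add (Continuous.intervalIntegrable (by fun_prop) _ _)
    (Continuous.intervalIntegrable (by fun_prop) _ _),
    intervalIntegral.integral_const_mul] at hpointwise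
  linarith [integral_deriv_hardyFlux_mul_le hW hv hR]

lemma lintegral_Ioi_hardy_le (hW : IsHardyWeight W T) (hv : ContDiff ℝ 1 v)
    (hdecay : Tendsto (fun R => R ^ 3 * ‖v R‖ ^ 2) atTop (𝓝 0)) :
    ∫⁻ r in Set.Ioi (0 : ℝ), ENNReal.ofReal (jb (r + T) ^ 2 * ‖v r‖ ^ 2 * W r) ≤
      ∫⁻ r in Set.Ioi (0 : ℝ),
        ENNReal.ofReal (16 * (jb (r - T) ^ 2 * ‖v r + r • deriv v r‖ ^ 2 * W r)) := by
  have hv_cont := hv.continuous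
  have hW_cont := hW.locallyLipschitz.continuous
  have hW_nonneg := hW.nonneg
  refine lintegral_Ioi_le_of_intervalIntegral_le (b := fun R => 4 * (R ^ 3 * ‖v R‖ ^ 2 * W T))
    (Continuous.locallyIntegrable (by fun_prop)) (Continuous.locallyIntegrable (by fun_prop))
    (fun r => mul_nonneg (by positivity) (hW_nonneg r))
    (fun r => mul_nonneg (by norm_num) (mul_nonneg (by positivity) (hW_nonneg r)))
    (by simpa using (hdecay.mul_const (W T)).const_mul 4) ?_
  filter_upwards [eventually_ge_atTop 0, eventually_ge_atTop T] with R hR hTR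
  refine (integral_hardy_le hW hv hR).trans ?_
  rw [hW.eq_of_le hTR]
  gcongr
  · exact hW_nonneg T
  · exact hardyFlux_le hR

end HalfLine

section Densities

variable {φ : ℝ → Pt → ℂ} {t : ℝ} {x : Pt}

lemma rad_nonneg (x : Pt) : 0 ≤ rad x := norm_nonneg x

lemma continuous_rad : Continuous rad := continuous_norm

lemma rad_smul {ω : Pt} (hω : ‖ω‖ = 1) {r : ℝ} (hr : 0 ≤ r) : rad (r • ω) = r := by
  rw [rad, norm_smul, hω, mul_one, Real.norm_of_nonneg hr]

/-- The density `(⟨t - r⟩² / r²) |φ|²` on the left-hand side of the Hardy inequality, with value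
`0` at the origin. -/
def potentialDens (φ : ℝ → Pt → ℂ) (t : ℝ) (x : Pt) : ℝ :=
  jb (t - rad x) ^ 2 / rad x ^ 2 * ‖φ t x‖ ^ 2

lemma potentialDens_nonneg (φ : ℝ → Pt → ℂ) (t : ℝ) (x : Pt) : 0 ≤ potentialDens φ t x := by
  unfold potentialDens; positivity

lemma hDens_nonneg (φ : ℝ → Pt → ℂ) (t : ℝ) (x : Pt) : 0 ≤ hDens φ t x := by
  unfold hDens; positivity

lemma measurable_potentialDens (hφ : Measurable (φ t)) : Measurable (potentialDens φ t) := by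
  have hrad := continuous_rad.measurable
  have hjb := continuous_jb.measurable
  unfold potentialDens
  fun_prop

lemma rad_sq_mul_potentialDens_le (hx : x ≠ 0) :
    rad x ^ 2 * potentialDens φ t x ≤ jb (rad x + |t|) ^ 2 * ‖φ t x‖ ^ 2 := by
  have hr : rad x ≠ 0 := norm_ne_zero_iff.2 hx
  have hjb : jb (t - rad x) ≤ jb (rad x + |t|) := jb_le_jb <| by
    rw [abs_of_nonneg (add_nonneg (rad_nonneg x) (abs_nonneg t)), add_comm]
    simpa [abs_of_nonneg (rad_nonneg x)] using abs_sub t (rad x)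
  calc rad x ^ 2 * potentialDens φ t x = jb (t - rad x) ^ 2 * ‖φ t x‖ ^ 2 := by
        unfold potentialDens
        field_simp
    _ ≤ jb (rad x + |t|) ^ 2 * ‖φ t x‖ ^ 2 := by
        gcongr
        exact jb_nonneg _

lemma dR_eq_fderiv (f : ℝ → Pt → ℂ) (t : ℝ) (x : Pt) :
    dR f t x = ((rad x : ℝ) : ℂ)⁻¹ * fderiv ℝ (f t) x x := by
  have hx : ∑ i, x i • EuclideanSpace.single i (1 : ℝ) = x := by
    simpa using (EuclideanSpace.basisFun (Fin 3) ℝ).sum_repr x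
  have hsum : fderiv ℝ (f t) x x = ∑ i, ((x i : ℝ) : ℂ) * dX i f t x := by
    conv_lhs => rw [← hx, map_sum, hx]
    simp only [map_smul, Complex.real_smul, dX]
  rw [hsum, dR]

lemma dR_rmul (hx : x ≠ 0) (hφ : DifferentiableAt ℝ (φ t) x) :
    dR (rmul φ) t x = φ t x + fderiv ℝ (φ t) x x := by
  have hnorm : DifferentiableAt ℝ (fun y : Pt => ‖y‖) x :=
    (contDiffAt_norm ℝ hx (n := 1)).differentiableAt one_ne_zero
  have hr : (‖x‖ : ℂ) ≠ 0 := by simpa using hx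
  have hsmul : rmul φ t = fun y => ‖y‖ • φ t y := by
    funext y
    rw [Complex.real_smul, rmul, rad]
  have hprod : fderiv ℝ (rmul φ t) x x = (‖x‖ : ℂ) * (φ t x + fderiv ℝ (φ t) x x) := by
    rw [hsmul, fderiv_fun_smul hnorm hφ]
    simp only [add_apply, smul_apply, ContinuousLinearMap.smulRight_apply, hnorm.fderiv_norm_self,
      Complex.real_smul]
    ring
  rw [dR_eq_fderiv, hprod, rad, inv_mul_cancel_left₀ hr]

lemma two_mul_dR (f : ℝ → Pt → ℂ) (t : ℝ) (x : Pt) : 2 * dR f t x = dL f t x - dLbar f t x := by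
  unfold dL dLbar
  ring

lemma two_mul_norm_dR_sq_le (f : ℝ → Pt → ℂ) (t : ℝ) (x : Pt) :
    2 * ‖dR f t x‖ ^ 2 ≤ ‖dL f t x‖ ^ 2 + ‖dLbar f t x‖ ^ 2 := by
  have hnorm : 2 * ‖dR f t x‖ ≤ ‖dL f t x‖ + ‖dLbar f t x‖ := by
    simpa [← two_mul_dR] using norm_sub_le (dL f t x) (dLbar f t x)
  have hsq := pow_le_pow_left₀ (by positivity) hnorm 2
  linarith [add_sq_le (a := ‖dL f t x‖) (b := ‖dLbar f t x‖)]

lemma two_mul_jb_sq_mul_norm_dR_rmul_sq_le (hx : x ≠ 0) :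
    2 * (jb (rad x - |t|) ^ 2 * ‖dR (rmul φ) t x‖ ^ 2) ≤ rad x ^ 2 * hDens φ t x := by
  have hr : rad x ≠ 0 := norm_ne_zero_iff.2 hx
  have hrad := abs_of_nonneg (rad_nonneg x)
  have hplus : jb (rad x - |t|) ≤ jb (t + rad x) := jb_le_jb <| by
    simpa [hrad, add_comm] using abs_abs_sub_abs_le (rad x) (-t)
  have hminus : jb (rad x - |t|) ≤ jb (t - rad x) := jb_le_jb <| by
    simpa [hrad, abs_sub_comm t] using abs_abs_sub_abs_le (rad x) t
  calc 2 * (jb (rad x - |t|) ^ 2 * ‖dR (rmul φ) t x‖ ^ 2)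
      = jb (rad x - |t|) ^ 2 * (2 * ‖dR (rmul φ) t x‖ ^ 2) := by ring
    _ ≤ jb (rad x - |t|) ^ 2 * (‖dL (rmul φ) t x‖ ^ 2 + ‖dLbar (rmul φ) t x‖ ^ 2) := by
        gcongr
        exact two_mul_norm_dR_sq_le _ t x
    _ ≤ jb (t + rad x) ^ 2 * ‖dL (rmul φ) t x‖ ^ 2
          + jb (t - rad x) ^ 2 * ‖dLbar (rmul φ) t x‖ ^ 2 := by
        rw [mul_add]
        gcongr <;> exact jb_nonneg _
    _ = rad x ^ 2 * hDens φ t x := by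
        simp only [hDens, norm_div, Complex.norm_real, norm_of_nonneg (rad_nonneg x)]
        field_simp

end Densities

section HardyInequality

variable {w : ℝ → ℝ} {φ : ℝ → Pt → ℂ} {t : ℝ}

lemma lintegral_ray_potentialDens_le (hw : IsHardyWeight w 0) (hφ : ContDiff ℝ 1 (φ t))
    (hdecay : Tendsto (fun x => rad x ^ ((3 : ℝ) / 2) * ‖φ t x‖) (cocompact Pt) (𝓝 0))
    {ω : Pt} (hω : ‖ω‖ = 1) :
    ∫⁻ r in Set.Ioi (0 : ℝ), ENNReal.ofReal (r ^ 2) *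
        ENNReal.ofReal (potentialDens φ t (r • ω) * w (rad (r • ω) - t)) ≤
      ∫⁻ r in Set.Ioi (0 : ℝ), ENNReal.ofReal (r ^ 2) *
        ENNReal.ofReal (8 * (hDens φ t (r • ω) * w (rad (r • ω) - t))) := by
  let v : ℝ → ℂ := fun r => φ t (r • ω)
  have hv : ContDiff ℝ 1 v := hφ.comp (contDiff_id.smul contDiff_const)
  have hW : IsHardyWeight (fun r => w (r - t)) |t| :=
    (hw.comp_sub_const t).mono (by simpa using le_abs_self t)
  have hrω {r : ℝ} (hr : 0 < r) : r • ω ≠ 0 :=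
    smul_ne_zero hr.ne' (norm_ne_zero_iff.1 (hω ▸ one_ne_zero))
  rw [← Metric.cobounded_eq_cocompact] at hdecay
  calc _ ≤ ∫⁻ r in Set.Ioi (0 : ℝ),
          ENNReal.ofReal (jb (r + |t|) ^ 2 * ‖v r‖ ^ 2 * w (r - t)) := by
        refine setLIntegral_mono' measurableSet_Ioi fun r (hr : 0 < r) => ?_
        have h := rad_sq_mul_potentialDens_le (φ := φ) (t := t) (hrω hr)
        rw [rad_smul hω hr.le] at h ⊢
        rw [← ENNReal.ofReal_mul (sq_nonneg r), ← mul_assoc]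
        exact ENNReal.ofReal_le_ofReal (mul_le_mul_of_nonneg_right h (hw.nonneg _))
    _ ≤ ∫⁻ r in Set.Ioi (0 : ℝ), ENNReal.ofReal
          (16 * (jb (r - |t|) ^ 2 * ‖v r + r • deriv v r‖ ^ 2 * w (r - t))) :=
        lintegral_Ioi_hardy_le hW hv (tendsto_pow_three_mul_norm_sq_of_decay hdecay hω)
    _ ≤ _ := by
        refine setLIntegral_mono' measurableSet_Ioi fun r (hr : 0 < r) => ?_
        have hdiff : DifferentiableAt ℝ (φ t) (r • ω) := hφ.differentiable one_ne_zero _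
        have h := two_mul_jb_sq_mul_norm_dR_rmul_sq_le (φ := φ) (t := t) (hrω hr)
        rw [dR_rmul (hrω hr) hdiff, ← smul_deriv_comp_smul hdiff, rad_smul hω hr.le] at h
        rw [rad_smul hω hr.le, ← ENNReal.ofReal_mul (sq_nonneg r)]
        refine ENNReal.ofReal_le_ofReal ?_
        linarith [mul_le_mul_of_nonneg_right h (hw.nonneg (r - t))]

lemma measurable_potentialDens_mul (hw : Continuous w) (hφ : Measurable (φ t)) :
    Measurable fun x => potentialDens φ t x * w (rad x - t) :=
  (measurable_potentialDens hφ).mul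
    (hw.comp (continuous_rad.sub continuous_const)).measurable

lemma lintegral_potentialDens_le (hw : IsHardyWeight w 0) (hφ : ContDiff ℝ 1 (φ t))
    (hdecay : Tendsto (fun x => rad x ^ ((3 : ℝ) / 2) * ‖φ t x‖) (cocompact Pt) (𝓝 0))
    (hmeas : AEMeasurable (fun x => hDens φ t x * w (rad x - t))) :
    ∫⁻ x, ENNReal.ofReal (potentialDens φ t x * w (rad x - t)) ≤
      ∫⁻ x, ENNReal.ofReal (8 * (hDens φ t x * w (rad x - t))) := by
  have hlhs := measurable_potentialDens_mul hw.locallyLipschitz.continuous hφ.continuous.measurable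
  have hdim : Module.finrank ℝ Pt - 1 = 2 := by simp
  rw [lintegral_eq_lintegral_sphere_lintegral_Ioi _ hlhs.ennreal_ofReal.aemeasurable,
    lintegral_eq_lintegral_sphere_lintegral_Ioi _ (hmeas.const_mul 8).ennreal_ofReal, hdim]
  exact lintegral_mono fun ω =>
    lintegral_ray_potentialDens_le hw hφ hdecay (norm_eq_of_mem_sphere ω)

theorem stmt5_general (hw : IsHardyWeight w 0) (hφ : ContDiff ℝ 1 (φ t))
    (hdecay : Tendsto (fun x => rad x ^ ((3 : ℝ) / 2) * ‖φ t x‖) (cocompact Pt) (𝓝 0))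
    (hint : Integrable (fun x => hDens φ t x * w (rad x - t))) :
    Integrable (fun x => potentialDens φ t x * w (rad x - t)) ∧
      ∫ x, potentialDens φ t x * w (rad x - t) ≤ 8 * ∫ x, hDens φ t x * w (rad x - t) := by
  rw [← integral_const_mul]
  exact integrable_and_integral_le_of_lintegral_le
    (measurable_potentialDens_mul hw.locallyLipschitz.continuous
      hφ.continuous.measurable).aestronglyMeasurable
    (fun x => mul_nonneg (potentialDens_nonneg φ t x) (hw.nonneg _)) (hint.const_mul 8)
    (fun x => mul_nonneg (by norm_num) (mul_nonneg (hDens_nonneg φ t x) (hw.nonneg _)))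
    (lintegral_potentialDens_le hw hφ hdecay hint.aemeasurable)

end HardyInequality

/-- Lemma 2.6: weighted Hardy-type estimate
`∫ (⟨t−r⟩²/r²)|φ|² w ≤ C ∫ (⟨t+r⟩²|L(rφ)/r|² + ⟨t−r⟩²|L̲(rφ)/r|²) w`. -/
theorem stmt5 :
    ∃ C : ℝ, 0 < C ∧
      ∀ (w : ℝ → ℝ) (φ : ℝ → Pt → ℂ),
        LocallyLipschitz w → (∀ q : ℝ, 0 ≤ w q) →
        (∀ q : ℝ, q ≤ 0 → deriv w q ≤ 0) → (∀ q : ℝ, 0 < q → deriv w q = 0) →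
        Smooth2 φ →
        (∀ t : ℝ, Tendsto (fun x : Pt => rad x ^ ((3 : ℝ) / 2) * ‖φ t x‖)
          (Filter.cocompact Pt) (𝓝 0)) →
        ∀ t : ℝ,
          Integrable (fun x : Pt => hDens φ t x * w (rad x - t)) →
          (∫ x : Pt, (jb (t - rad x) ^ 2 / rad x ^ 2) * ‖φ t x‖ ^ 2 * w (rad x - t))
            ≤ C * ∫ x : Pt, hDens φ t x * w (rad x - t) := by
  refine ⟨8, by norm_num, fun w φ hw hw0 hle heq hφ hdecay t hint => ?_⟩
  have hφt : ContDiff ℝ 1 (φ t) := (hφ.of_le (mod_cast le_top)).comp (contDiff_prodMk_right t)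
  exact (stmt5_general ⟨hw, hw0, hle, heq⟩ hφt (hdecay t) hint).2
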